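/- If a is a ribbon with n nodes all of which are negative, then γ(a) = n/2 + 1: every extension of a has at least n/2 + 1 critical points in the open unit disk, and some extension of a has exactly n/2 + 1 critical points. -/

import Mathlib

open scoped RealInnerProductSpace

noncomputable section

abbrev E2 : Type := EuclideanSpace ℝ (Fin 2)

/-- The point (cos t, sin t) on the unit circle in ℝ². -/
def sphPt (t : ℝ) : E2 := (EuclideanSpace.equiv (Fin 2) ℝ).symm ![Real.cos t, Real.sin t]

/-- A ribbon with `n` nodes, encoded via the angle parametrization `g = φ ∘ (cos, sin)`
of a C^∞ function `φ : S¹ → ℝ` whose critical points on the circle are exactly the `n`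
nondegenerate local extrema (nodes) at angles `θ 0 < θ 1 < ⋯ < θ (n-1)` in `[0, 2π)`,
with pairwise distinct critical values, together with a marking `ν` of the nodes by `±1`. -/
structure Ribbon (n : ℕ) : Type where
  g : ℝ → ℝ
  θ : Fin n → ℝ
  ν : Fin n → ℤ
  n_even : Even n
  n_pos : 0 < n
  smooth_g : ContDiff ℝ (⊤ : ℕ∞) g
  periodic_g : Function.Periodic g (2 * Real.pi)
  theta_mem : ∀ i, θ i ∈ Set.Ico (0 : ℝ) (2 * Real.pi)
  theta_mono : StrictMono θ
  node_crit : ∀ i, deriv g (θ i) = 0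
  node_nondeg : ∀ i, deriv (deriv g) (θ i) ≠ 0
  crit_only : ∀ t ∈ Set.Ico (0 : ℝ) (2 * Real.pi), deriv g t = 0 → ∃ i, t = θ i
  values_distinct : ∀ i j, g (θ i) = g (θ j) → i = j
  nu_sign : ∀ i, ν i = 1 ∨ ν i = -1

/-- The signature σ = s₊ − s₋ of a ribbon. -/
def Ribbon.sigma {n : ℕ} (a : Ribbon n) : ℤ := ∑ i, a.ν i

/-- Critical points of `f` in the open unit disk. -/
def critPts (f : E2 → ℝ) : Set E2 :=
  {x | x ∈ Metric.ball (0 : E2) 1 ∧ fderiv ℝ f x = 0}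

/-- `f : ℝ² → ℝ` is an extension of the ribbon `a`: it is C^∞, agrees with `φ` on the unit
circle, has nowhere-vanishing gradient on the circle, and at each node the radial derivative
`⟪∇f(p), p⟫` has sign `ν p` if `p` is a local maximum of `φ` (second derivative of `g`
negative there) and sign `−ν p` if `p` is a local minimum of `φ`. -/
def IsExtension {n : ℕ} (a : Ribbon n) (f : E2 → ℝ) : Prop :=
  ContDiff ℝ (⊤ : ℕ∞) f ∧
  (∀ t : ℝ, f (sphPt t) = a.g t) ∧
  (∀ x ∈ Metric.sphere (0 : E2) 1, fderiv ℝ f x ≠ 0) ∧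
  (∀ i : Fin n,
    (deriv (deriv a.g) (a.θ i) < 0 →
      0 < (a.ν i : ℝ) * ⟪gradient f (sphPt (a.θ i)), sphPt (a.θ i)⟫) ∧
    (0 < deriv (deriv a.g) (a.θ i) →
      (a.ν i : ℝ) * ⟪gradient f (sphPt (a.θ i)), sphPt (a.θ i)⟫ < 0))

/-- The ribbon invariant γ: the infimum, over all extensions `f` of `a`, of the number of
critical points of `f` in the open unit disk (a value in `ℕ∞`). -/
def gammaR {n : ℕ} (a : Ribbon n) : ℕ∞ :=
  sInf {k : ℕ∞ | ∃ f : E2 → ℝ, IsExtension a f ∧ (critPts f).encard = k}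

/-!
Let `M` be the number of local maxima of `φ`. As the nodes are negative, `f` is larger just inside
a local maximum of `φ` and smaller just inside a local minimum, so on the closed disk `f` has no
local extrema on the circle. For the lower bound, attach to each maximum of `φ` a level slightly
below its value, and call the maximum dominated if it can be joined to a higher one above its
level. A maximum that is not dominated leads uphill to a local maximum of `f` of its own. Since
paths in the disk that join interlaced pairs of boundary points meet, a dominated maximum
separates the two valleys next to it below its level, and `k` such separations force `k + 1` local
minima. In total `f` has at least `M + 1` local extrema, all of them in the open disk.

For the upper bound, in polar coordinates take `f = φ + (1 - r ^ 2) h` near the circle, with `h`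
positive at the maxima and negative at the minima of `φ`, cut off inside and dominated by the
paraboloid `-K (1 - r ^ 2) ^ 2`. It has one critical point on the ray through each maximum and one
at the origin, hence `M + 1`. Comparing the two bounds for `φ` and `-φ` shows that there are as
many maxima as minima, so that `M = n / 2`.
-/

section InterlacedPaths

open Complex

lemma re_one_sub_pos {w : ℂ} (hw : ‖w‖ ≤ 1) (hw1 : w ≠ 1) : 0 < (1 - w).re := by
  have hre : w.re ≤ 1 := (re_le_norm w).trans hw
  refine sub_pos.2 (hre.lt_of_ne fun h ↦ hw1 ?_)
  have him : w.im = 0 := by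
    have := Complex.sq_norm w
    rw [normSq_apply, h] at this
    nlinarith [norm_nonneg w]
  exact Complex.ext h him

lemma one_sub_exp_mul_I (x : ℝ) :
    1 - cexp (x * I) = (2 * Real.sin (x / 2) : ℝ) * cexp (((x - Real.pi) / 2 : ℝ) * I) := by
  have hx : cexp (x * I) = cexp ((x / 2 : ℝ) * I) * cexp ((x / 2 : ℝ) * I) := by
    rw [← Complex.exp_add]; push_cast; ring_nf
  have hshift : cexp (((x - Real.pi) / 2 : ℝ) * I) = cexp ((x / 2 : ℝ) * I) * -I := by
    rw [← exp_neg_pi_div_two_mul_I, ← Complex.exp_add]; push_cast; ring_nf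
  have hcancel : cexp (-(x / 2 : ℝ) * I) * cexp ((x / 2 : ℝ) * I) = 1 := by
    rw [← Complex.exp_add, neg_mul, neg_add_cancel, Complex.exp_zero]
  rw [hx, hshift, ofReal_mul, ofReal_sin, Complex.sin]
  push_cast at hcancel ⊢
  linear_combination (cexp (x / 2 * I) * (cexp (-(x / 2) * I) - cexp (x / 2 * I))) * I_mul_I +
    (-1 : ℂ) * hcancel

lemma arg_one_sub_exp_mul_I {x : ℝ} (hx : x ∈ Set.Ioo 0 (2 * Real.pi)) :
    arg (1 - cexp (x * I)) = (x - Real.pi) / 2 := by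
  have hsin : 0 < Real.sin (x / 2) :=
    Real.sin_pos_of_pos_of_lt_pi (by linarith [hx.1]) (by linarith [hx.2])
  rw [one_sub_exp_mul_I, arg_real_mul _ (by positivity), arg_exp_mul_I, toIocMod_eq_self]
  constructor <;> linarith [hx.1, hx.2]

lemma arg_one_sub_exp_mul_I_of_neg {x : ℝ} (hx : x ∈ Set.Ioo (-(2 * Real.pi)) 0) :
    arg (1 - cexp (x * I)) = (x + Real.pi) / 2 := by
  have hper : cexp (x * I) = cexp ((x + 2 * Real.pi : ℝ) * I) := by
    simpa using (exp_mul_I_periodic (x : ℂ)).symm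
  rw [hper, arg_one_sub_exp_mul_I ⟨by linarith [hx.1], by linarith [hx.2]⟩]
  ring

lemma sub_eq_sub_of_exp_eq_mul_exp {A : Type*} [TopologicalSpace A] [PreconnectedSpace A]
    {L M : A → ℂ} (hL : Continuous L) (hM : Continuous M) (c : ℂ)
    (h : ∀ x, cexp (L x) = c * cexp (M x)) (x y : A) : L x - L y = M x - M y := by
  have hconst : L x - M x = L y - M y :=
    isCoveringMap_exp.const_of_comp (g := fun z ↦ L z - M z) (hL.sub hM)
      (fun z z' ↦ by
        simp only [Complex.exp_sub, h, mul_div_cancel_right₀ _ (Complex.exp_ne_zero _)]) x y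
  linear_combination hconst

lemma im_sub_im_of_exp_eq_exp_mul_I_sub {A : Type*} [TopologicalSpace A] [PreconnectedSpace A]
    {L γ : A → ℂ} {a : ℝ} (hL : Continuous L) (hγ : Continuous γ) (hγ1 : ∀ s, ‖γ s‖ ≤ 1)
    (h : ∀ s, cexp (L s) = cexp (a * I) - γ s) {s₀ s₁ : A} {b₀ b₁ : ℝ}
    (h₀ : γ s₀ = cexp (b₀ * I)) (h₁ : γ s₁ = cexp (b₁ * I)) :
    (L s₁).im - (L s₀).im =
      arg (1 - cexp ((b₁ - a : ℝ) * I)) - arg (1 - cexp ((b₀ - a : ℝ) * I)) := by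
  set w : A → ℂ := fun s ↦ γ s * cexp ((-a : ℝ) * I) with hw
  have hfactor (s : A) : cexp (L s) = cexp (a * I) * (1 - w s) := by
    rw [h, mul_sub, mul_one, hw, mul_left_comm, ← Complex.exp_add]
    simp
  have hpos (s : A) : 0 < (1 - w s).re := by
    refine re_one_sub_pos (by simpa only [hw, norm_mul, norm_exp_ofReal_mul_I, mul_one] using hγ1 s)
      fun hs ↦ Complex.exp_ne_zero (L s) ?_
    rw [hfactor, hs, sub_self, mul_zero]
  have hlog : Continuous fun s ↦ log (1 - w s) :=
    Continuous.clog (by fun_prop) fun s ↦ mem_slitPlane_iff.2 (.inl (hpos s))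
  have hw_of {s : A} {b : ℝ} (hs : γ s = cexp (b * I)) : w s = cexp ((b - a : ℝ) * I) := by
    simp only [hw, hs, ← Complex.exp_add]
    push_cast
    ring_nf
  rw [← hw_of h₀, ← hw_of h₁, ← log_im, ← log_im, ← sub_im, ← sub_im]
  congr 1
  refine sub_eq_sub_of_exp_eq_mul_exp hL hlog (cexp (a * I)) (fun s ↦ ?_) s₁ s₀
  rw [hfactor, exp_log (ne_zero_of_re_pos (hpos s))]

/-- If the paths did not meet, `α s - β t` would have a continuous logarithm on the square, whose
imaginary part would change by different amounts along the two ways around its boundary. -/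
theorem exists_path_eq_path_of_interlaced {a b c d : ℝ} (hab : a < b) (hbc : b < c) (hcd : c < d)
    (hda : d < a + 2 * Real.pi) (α : Path (cexp (a * I)) (cexp (c * I)))
    (β : Path (cexp (b * I)) (cexp (d * I))) (hα : ∀ s, ‖α s‖ ≤ 1) (hβ : ∀ t, ‖β t‖ ≤ 1) :
    ∃ s t, α s = β t := by
  by_contra! hne
  have : ContractibleSpace unitInterval := (convex_Icc 0 1).contractibleSpace ⟨0, by simp⟩
  have : LocallyPathConnectedSpace unitInterval := (convex_Icc 0 1).locallyPathConnectedSpace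
  obtain ⟨L, ⟨-, hL⟩, -⟩ := isCoveringMapOn_exp.existsUnique_continuousMap_lifts
    (⟨fun p ↦ α p.1 - β p.2, by fun_prop⟩ : C(unitInterval × unitInterval, ℂ))
    (a₀ := (0, 0)) (exp_log (sub_ne_zero.2 (hne 0 0))) fun p ↦ sub_ne_zero.2 (hne p.1 p.2)
  replace hL (s t) : cexp (L (s, t)) = α s - β t := congrFun hL (s, t)
  have hL' (s t) : cexp (L (s, t) + Real.pi * I) = β t - α s := by
    rw [Complex.exp_add, exp_pi_mul_I, hL]; ring
  have hleft := im_sub_im_of_exp_eq_exp_mul_I_sub (L := fun t ↦ L (0, t)) (by fun_prop)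
    β.continuous hβ (fun t ↦ by rw [hL, α.source]) β.source β.target
  have hright := im_sub_im_of_exp_eq_exp_mul_I_sub (L := fun t ↦ L (1, t)) (by fun_prop)
    β.continuous hβ (fun t ↦ by rw [hL, α.target]) β.source β.target
  have hbottom := im_sub_im_of_exp_eq_exp_mul_I_sub (L := fun s ↦ L (s, 0) + Real.pi * I)
    (by fun_prop) α.continuous hα (fun s ↦ by rw [hL', β.source]) α.source α.target
  have htop := im_sub_im_of_exp_eq_exp_mul_I_sub (L := fun s ↦ L (s, 1) + Real.pi * I)
    (by fun_prop) α.continuous hα (fun s ↦ by rw [hL', β.target]) α.source α.target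
  rw [arg_one_sub_exp_mul_I ⟨by linarith, by linarith⟩,
    arg_one_sub_exp_mul_I ⟨by linarith, by linarith⟩] at hleft
  rw [arg_one_sub_exp_mul_I ⟨by linarith, by linarith⟩,
    arg_one_sub_exp_mul_I_of_neg ⟨by linarith, by linarith⟩] at hright hbottom
  rw [arg_one_sub_exp_mul_I_of_neg ⟨by linarith, by linarith⟩,
    arg_one_sub_exp_mul_I_of_neg ⟨by linarith, by linarith⟩] at htop
  simp only [add_im, add_sub_add_right_eq_sub] at hbottom htop
  linarith [Real.pi_pos]

end InterlacedPaths

section LocalExtrema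

variable {X : Type*} [TopologicalSpace X] [CompactSpace X] [LocallyPathConnectedSpace X] {f : X → ℝ}

lemma exists_joinedIn_isLocalMax (hf : Continuous f) {p : X} {c : ℝ} (hc : c < f p) :
    ∃ q, JoinedIn {x | c < f x} p q ∧ IsLocalMax f q := by
  have hopen : IsOpen {x | c < f x} := isOpen_lt continuous_const hf
  set C := pathComponentIn {x | c < f x} p
  have hpC : p ∈ closure C := subset_closure (mem_pathComponentIn_self hc)
  obtain ⟨q, hqC, hmax⟩ := isClosed_closure.isCompact.exists_isMaxOn ⟨p, hpC⟩ hf.continuousOn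
  have hq : c < f q := hc.trans_le (hmax hpC)
  have hnhds : pathComponentIn {x | c < f x} q ∈ nhds q :=
    (hopen.pathComponentIn q).mem_nhds (mem_pathComponentIn_self hq)
  obtain ⟨u, hqu, hpu⟩ := mem_closure_iff_nhds.1 hqC _ hnhds
  have hpq : JoinedIn {x | c < f x} p q := hpu.trans hqu.symm
  refine ⟨q, hpq, Filter.mem_of_superset hnhds fun x hx ↦ hmax (subset_closure (hpq.trans hx))⟩

lemma exists_joinedIn_isLocalMin (hf : Continuous f) {p : X} {c : ℝ} (hc : f p < c) :
    ∃ q, JoinedIn {x | f x < c} p q ∧ IsLocalMin f q := by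
  obtain ⟨q, hpq, hq⟩ := exists_joinedIn_isLocalMax hf.neg (neg_lt_neg hc)
  exact ⟨q, by simpa only [Pi.neg_apply, neg_lt_neg_iff] using hpq, by simpa using hq.neg⟩

end LocalExtrema

section Counting

open Classical in
/-- Each `W i` separates the pair `a i`, `b i`, and no set separates a pair of lower level `c`:
splitting `Y` along the set of highest level leaves two instances of the same problem. -/
lemma card_lt_card_of_separating {ι α β : Type*} [LinearOrder β] (c : ι → β) {a b : ι → α}
    {W : ι → Set α} (S : Finset ι) (Y : Finset α) (hY : Y.Nonempty)
    (hmem : ∀ i ∈ S, a i ∈ Y ∧ b i ∈ Y) (hsep : ∀ i ∈ S, a i ∈ W i ∧ b i ∉ W i)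
    (hnest : ∀ i ∈ S, ∀ j ∈ S, j ≠ i → c j ≤ c i → (a j ∈ W i ↔ b j ∈ W i)) :
    S.card < Y.card := by
  induction S using Finset.strongInduction generalizing Y with
  | H S ih =>
  obtain rfl | hS := S.eq_empty_or_nonempty
  · simpa using hY
  obtain ⟨i, hi, hmax⟩ := S.exists_max_image c hS
  have half (V : Set α) (hV : V = W i ∨ V = (W i)ᶜ) (hYV : ∃ y ∈ Y, y ∈ V) :
      ((S.erase i).filter (a · ∈ V)).card < (Y.filter (· ∈ V)).card := by
    have hsub : (S.erase i).filter (a · ∈ V) ⊆ S.erase i := Finset.filter_subset _ _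
    have hS' {j} (hj : j ∈ (S.erase i).filter (a · ∈ V)) : j ∈ S :=
      Finset.mem_of_mem_erase (hsub hj)
    refine ih _ (hsub.trans_ssubset (Finset.erase_ssubset hi)) _ ?_ (fun j hj ↦ ?_)
      (fun j hj ↦ hsep j (hS' hj)) fun k hk j hj ↦ hnest k (hS' hk) j (hS' hj)
    · obtain ⟨y, hy, hyV⟩ := hYV
      exact ⟨y, Finset.mem_filter.2 ⟨hy, hyV⟩⟩
    · have hji := hnest i hi j (hS' hj) (Finset.ne_of_mem_erase (hsub hj)) (hmax j (hS' hj))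
      have haV : a j ∈ V := (Finset.mem_filter.1 hj).2
      have hbV : b j ∈ V := by
        obtain rfl | rfl := hV
        · exact hji.1 haV
        · exact fun hb ↦ haV (hji.2 hb)
      exact ⟨Finset.mem_filter.2 ⟨(hmem j (hS' hj)).1, haV⟩,
        Finset.mem_filter.2 ⟨(hmem j (hS' hj)).2, hbV⟩⟩
  have hin := half (W i) (.inl rfl) ⟨a i, (hmem i hi).1, (hsep i hi).1⟩
  have hout := half (W i)ᶜ (.inr rfl) ⟨b i, (hmem i hi).2, (hsep i hi).2⟩
  have hSsplit := (S.erase i).card_filter_add_card_filter_not (a · ∈ W i)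
  have hYsplit := Y.card_filter_add_card_filter_not (· ∈ W i)
  have hSi := Finset.card_erase_add_one hi
  simp only [Set.mem_compl_iff] at hout
  omega

end Counting

section Peaks

open Filter Set Topology

variable {X : Type*}

/-- A loop of period `T` in `X` is *interlacing* if paths joining two interlaced pairs of its points
always meet, as is the case for the boundary loop of a disk. -/
structure IsInterlacingLoop [TopologicalSpace X] (φ : ℝ → X) (T : ℝ) : Prop where
  pos : 0 < T
  continuous : Continuous φ
  periodic : Function.Periodic φ T
  exists_eq : ∀ ⦃a b c d : ℝ⦄, a < b → b < c → c < d → d < a + T →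
    ∀ (α : Path (φ a) (φ c)) (β : Path (φ b) (φ d)), ∃ s t, α s = β t

/-- A family of peaks of `f` along a loop `φ`: the maxima of `f ∘ φ` over the intervals
`[left i, right i]` are attained at `top i`, and have distinct values. The level `level i` lies so
close below the `i`-th peak that the feet `left i`, `right i` and all lower peaks are below it. -/
structure PeakFamily (f : X → ℝ) (φ : ℝ → X) (ι : Type*) where
  top : ι → ℝ
  left : ι → ℝ
  right : ι → ℝ
  level : ι → ℝ
  injective : Function.Injective fun i ↦ f (φ (top i))
  left_lt : ∀ i, left i < top i
  lt_right : ∀ i, top i < right i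
  le_top : ∀ i, ∀ s ∈ Icc (left i) (right i), f (φ s) ≤ f (φ (top i))
  level_lt : ∀ i, level i < f (φ (top i))
  left_lt_level : ∀ i, f (φ (left i)) < level i
  right_lt_level : ∀ i, f (φ (right i)) < level i
  top_lt_level : ∀ i j, f (φ (top j)) < f (φ (top i)) → f (φ (top j)) < level i

lemma exists_level {ι : Type*} [Finite ι] (M : ι → ℝ) {i : ι} {m : ℝ} (hm : m < M i) :
    ∃ c < M i, m < c ∧ ∀ j, M j < M i → M j < c := by
  have hlower : ∀ᶠ c in 𝓝[<] M i, ∀ j, M j < M i → M j < c :=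
    eventually_all.2 fun j ↦ eventually_imp_distrib_left.2 fun hj ↦
      nhdsWithin_le_nhds (lt_mem_nhds hj)
  have hgt : ∀ᶠ c in 𝓝[<] M i, m < c := nhdsWithin_le_nhds (lt_mem_nhds hm)
  have hlt : ∀ᶠ c in 𝓝[<] M i, c < M i := self_mem_nhdsWithin
  obtain ⟨c, hlower, hgt, hlt⟩ := (hlower.and (hgt.and hlt)).exists
  exact ⟨c, hlt, hgt, hlower⟩

lemma exists_feet {u : ℝ → ℝ} {p : ℝ} (hp : ∀ᶠ s in 𝓝[≠] p, u s < u p) :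
    ∃ l < p, ∃ r > p, u l < u p ∧ u r < u p ∧ ∀ s ∈ Icc l r, u s ≤ u p := by
  obtain ⟨l, hlp, hl⟩ := mem_nhdsLT_iff_exists_Ico_subset.1 (hp.filter_mono (nhdsLT_le_nhdsNE p))
  obtain ⟨r, hpr, hr⟩ := mem_nhdsGT_iff_exists_Ioc_subset.1 (hp.filter_mono (nhdsGT_le_nhdsNE p))
  refine ⟨l, hlp, r, hpr, hl ⟨le_rfl, hlp⟩, hr ⟨hpr, le_rfl⟩, fun s hs ↦ ?_⟩
  obtain hsp | rfl | hps := lt_trichotomy s p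
  · exact (hl ⟨hs.1, hsp⟩).le
  · exact le_rfl
  · exact (hr ⟨hps, hs.2⟩).le

lemma exists_peakFamily {ι : Type*} [Finite ι] {f : X → ℝ} {φ : ℝ → X} (p : ι → ℝ)
    (hinj : Function.Injective fun i ↦ f (φ (p i)))
    (hp : ∀ i, ∀ᶠ s in 𝓝[≠] p i, f (φ s) < f (φ (p i))) :
    Nonempty (PeakFamily f φ ι) := by
  choose l hl r hr hfl hfr hle using fun i ↦ exists_feet (u := f ∘ φ) (hp i)
  choose c hc hmc hlower using fun i ↦ exists_level (fun i ↦ f (φ (p i))) (max_lt (hfl i) (hfr i))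
  exact ⟨⟨p, l, r, c, hinj, hl, hr, hle, hc, fun i ↦ (max_lt_iff.1 (hmc i)).1,
    fun i ↦ (max_lt_iff.1 (hmc i)).2, hlower⟩⟩

namespace PeakFamily

variable {f : X → ℝ} {φ : ℝ → X} {ι : Type*} (P : PeakFamily f φ ι)

lemma top_lt_level_of_level_le {i j : ι} (hne : j ≠ i) (hle : P.level j ≤ P.level i) :
    f (φ (P.top j)) < P.level i := by
  rcases (P.injective.ne hne).lt_or_gt with h | h
  · exact P.top_lt_level i j h
  · exact absurd (P.top_lt_level j i h) (hle.trans_lt (P.level_lt i)).not_gt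

variable [TopologicalSpace X]

/-- A peak is *dominated* if it can be joined to a higher peak above its level. -/
def Dominated (i : ι) : Prop :=
  ∃ j, f (φ (P.top i)) < f (φ (P.top j)) ∧
    JoinedIn {x | P.level i < f x} (φ (P.top i)) (φ (P.top j))

lemma eq_of_joinedIn_of_not_dominated {q : X} {i j : ι} (hi : ¬ P.Dominated i)
    (hj : ¬ P.Dominated j) (hiq : JoinedIn {x | P.level i < f x} (φ (P.top i)) q)
    (hjq : JoinedIn {x | P.level j < f x} (φ (P.top j)) q) : i = j := by
  have dominated_of_lt {i j : ι} (hij : f (φ (P.top i)) < f (φ (P.top j)))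
      (hiq : JoinedIn {x | P.level i < f x} (φ (P.top i)) q)
      (hjq : JoinedIn {x | P.level j < f x} (φ (P.top j)) q) : P.Dominated i :=
    ⟨j, hij, hiq.trans (hjq.symm.mono fun _ hx ↦
      ((P.level_lt i).trans (P.top_lt_level j i hij)).trans hx)⟩
  by_contra hne
  rcases (P.injective.ne hne).lt_or_gt with h | h
  · exact hi (dominated_of_lt h hiq hjq)
  · exact hj (dominated_of_lt h hjq hiq)

lemma not_joinedIn_left_right {T : ℝ} (hφ : IsInterlacingLoop φ T) {i : ι} (hi : P.Dominated i) :
    ¬ JoinedIn {x | f x < P.level i} (φ (P.left i)) (φ (P.right i)) := by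
  rintro ⟨α, hα⟩
  obtain ⟨j, hij, β, hβ⟩ := hi
  set t := toIcoMod hφ.pos (P.top i) (P.top j)
  have htj : φ t = φ (P.top j) := hφ.periodic.sub_zsmul_eq _
  have hit : P.top i ≤ t ∧ t < P.top i + T := toIcoMod_mem_Ico hφ.pos (P.top i) (P.top j)
  have hout {s : ℝ} (hs : φ s = φ (P.top j)) : s < P.left i ∨ P.right i < s := by
    by_contra! hmem
    exact (hs ▸ P.le_top i s hmem).not_gt hij
  have hrt : P.right i < t := (hout htj).resolve_left (by linarith [P.left_lt i, hit.1])
  have htl : t < P.left i + T := by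
    have hlt : t - T < P.left i := (hout (by rw [hφ.periodic.sub_eq, htj])).resolve_right
      (by linarith [P.lt_right i, hit.2])
    linarith
  obtain ⟨s, s', hss'⟩ :=
    hφ.exists_eq (P.left_lt i) (P.lt_right i) hrt htl α (β.cast rfl htj)
  have hα' : f (α s) < P.level i := hα s
  exact hα'.not_gt (hss' ▸ hβ s')

lemma joinedIn_left_right (hφ : Continuous φ) {c : ℝ} {i : ι} (hi : f (φ (P.top i)) < c) :
    JoinedIn {x | f x < c} (φ (P.left i)) (φ (P.right i)) := by
  have hle : P.left i ≤ P.right i := ((P.left_lt i).trans (P.lt_right i)).le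
  have harc : IsPathConnected (φ '' Icc (P.left i) (P.right i)) :=
    ((convex_Icc _ _).isPathConnected ⟨_, left_mem_Icc.2 hle⟩).image hφ
  refine (harc.joinedIn _ ⟨_, left_mem_Icc.2 hle, rfl⟩ _
    ⟨_, right_mem_Icc.2 hle, rfl⟩).mono ?_
  rintro _ ⟨s, hs, rfl⟩
  exact (P.le_top i s hs).trans_lt hi

variable [CompactSpace X] [LocallyPathConnectedSpace X]

lemma encard_not_dominated_le (hf : Continuous f) :
    {i | ¬ P.Dominated i}.encard ≤ {x | IsLocalMax f x}.encard := by
  choose q hq hmax using fun i ↦ exists_joinedIn_isLocalMax hf (P.level_lt i)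
  exact encard_le_encard_of_injOn (f := q) (fun i _ ↦ hmax i) fun i hi j hj hij ↦
    P.eq_of_joinedIn_of_not_dominated hi hj (hq i) (hij ▸ hq j)

lemma encard_dominated_add_one_le [Finite ι] {T : ℝ} (hf : Continuous f)
    (hφ : IsInterlacingLoop φ T) :
    {i | P.Dominated i}.encard + 1 ≤ {x | IsLocalMin f x}.encard := by
  choose a ha hamin using fun i ↦ exists_joinedIn_isLocalMin hf (P.left_lt_level i)
  choose b hb hbmin using fun i ↦ exists_joinedIn_isLocalMin hf (P.right_lt_level i)
  obtain hinf | hfin := {x | IsLocalMin f x}.finite_or_infinite.symm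
  · simp [hinf.encard_eq]
  obtain ⟨z, -, hz⟩ := exists_joinedIn_isLocalMin hf (lt_add_one (f (φ 0)))
  have hS := {i | P.Dominated i}.toFinite
  have hcard := card_lt_card_of_separating (a := a) (b := b) P.level
    (W := fun i ↦ {x | JoinedIn {x | f x < P.level i} (φ (P.left i)) x})
    hS.toFinset hfin.toFinset ⟨z, hfin.mem_toFinset.2 hz⟩
    (fun i _ ↦ ⟨hfin.mem_toFinset.2 (hamin i), hfin.mem_toFinset.2 (hbmin i)⟩)
    (fun i hi ↦ ⟨ha i, fun hlr ↦ P.not_joinedIn_left_right hφ (hS.mem_toFinset.1 hi)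
      (JoinedIn.trans hlr (hb i).symm)⟩)
    fun i _ j _ hne hle ↦ by
      have hmono : {x | f x < P.level j} ⊆ {x | f x < P.level i} := fun x hx ↦ hx.trans_le hle
      have hab : JoinedIn {x | f x < P.level i} (a j) (b j) :=
        (((ha j).symm.mono hmono).trans
          (P.joinedIn_left_right hφ.continuous (P.top_lt_level_of_level_le hne hle))).trans
          ((hb j).mono hmono)
      exact ⟨fun h ↦ JoinedIn.trans h hab, fun h ↦ JoinedIn.trans h hab.symm⟩
  rw [hS.encard_eq_coe_toFinset_card, hfin.encard_eq_coe_toFinset_card]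
  exact_mod_cast hcard

end PeakFamily

/-- A peak that is not dominated has its own local maximum, and each dominated peak separates the
two valleys next to it, which forces an additional local minimum. -/
theorem card_add_one_le_encard_isLocalMax_add_encard_isLocalMin [TopologicalSpace X]
    [CompactSpace X] [LocallyPathConnectedSpace X] {ι : Type*} [Finite ι] {f : X → ℝ}
    (hf : Continuous f) {φ : ℝ → X} {T : ℝ} (hφ : IsInterlacingLoop φ T) (p : ι → ℝ)
    (hinj : Function.Injective fun i ↦ f (φ (p i)))
    (hp : ∀ i, ∀ᶠ s in 𝓝[≠] p i, f (φ s) < f (φ (p i))) :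
    ENat.card ι + 1 ≤ {x | IsLocalMax f x}.encard + {x | IsLocalMin f x}.encard := by
  obtain ⟨P⟩ := exists_peakFamily p hinj hp
  calc ENat.card ι + 1 = {i | ¬ P.Dominated i}.encard + ({i | P.Dominated i}.encard + 1) := by
        rw [← add_assoc, add_comm {i | ¬ P.Dominated i}.encard, ← encard_univ,
          ← encard_add_encard_compl {i | P.Dominated i}, compl_ofPred]
    _ ≤ _ := add_le_add (P.encard_not_dominated_le hf) (P.encard_dominated_add_one_le hf hφ)

end Peaks

section ClosedBall

open Metric

variable {X : Type*} [PseudoMetricSpace X] {f : X → ℝ} {z : X} {r : ℝ}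

lemma encard_isLocalMax_closedBall_le
    (h : ∀ x ∈ sphere z r, ¬ IsLocalMaxOn f (closedBall z r) x) :
    {x : closedBall z r | IsLocalMax (fun x : closedBall z r ↦ f x) x}.encard ≤
      {x ∈ ball z r | IsLocalMax f x}.encard := by
  refine Set.encard_le_encard_of_injOn (f := Subtype.val) (fun x hx ↦ ?_)
    Subtype.val_injective.injOn
  have hon : IsLocalMaxOn f (closedBall z r) x := (eventually_nhds_subtype_iff _ x _).1 hx
  have hball : (x : X) ∈ ball z r := lt_of_le_of_ne x.2 fun hs ↦ h x hs hon
  exact ⟨hball, hon.isLocalMax (Filter.mem_of_superset (isOpen_ball.mem_nhds hball)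
    ball_subset_closedBall)⟩

lemma encard_isLocalMin_closedBall_le
    (h : ∀ x ∈ sphere z r, ¬ IsLocalMinOn f (closedBall z r) x) :
    {x : closedBall z r | IsLocalMin (fun x : closedBall z r ↦ f x) x}.encard ≤
      {x ∈ ball z r | IsLocalMin f x}.encard := by
  have hneg := encard_isLocalMax_closedBall_le (f := fun x ↦ -f x) fun x hx hmax ↦
    h x hx (by simpa only [neg_neg] using hmax.neg)
  simpa only [IsLocalMax, IsMaxFilter, IsLocalMin, IsMinFilter, neg_le_neg_iff] using hneg

end ClosedBall

section Disk

open Metric Topology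

/-- The plane `E2` as the complex plane, with `sphPt t` corresponding to `exp (t * I)`. -/
def toComplex : E2 ≃ₗᵢ[ℝ] ℂ := Complex.orthonormalBasisOneI.repr.symm

lemma toComplex_sphPt (t : ℝ) : toComplex (sphPt t) = Complex.exp (t * Complex.I) := by
  rw [toComplex, Complex.orthonormalBasisOneI_repr_symm_apply, Complex.exp_mul_I]
  simp [sphPt]

lemma norm_sphPt (t : ℝ) : ‖sphPt t‖ = 1 := by
  rw [← toComplex.norm_map, toComplex_sphPt, Complex.norm_exp_ofReal_mul_I]

lemma sphPt_periodic : Function.Periodic sphPt (2 * Real.pi) := fun t ↦ by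
  simp only [sphPt, Real.cos_add_two_pi, Real.sin_add_two_pi]

lemma contDiff_sphPt : ContDiff ℝ (⊤ : ℕ∞) sphPt := by
  refine contDiff_euclidean.2 fun i ↦ ?_
  fin_cases i
  exacts [Real.contDiff_cos, Real.contDiff_sin]

lemma sphPt_mem_closedBall (t : ℝ) : sphPt t ∈ closedBall (0 : E2) 1 := by
  simp [norm_sphPt]

theorem isInterlacingLoop_sphPt :
    IsInterlacingLoop (fun t ↦ (⟨sphPt t, sphPt_mem_closedBall t⟩ : closedBall (0 : E2) 1))
      (2 * Real.pi) where
  pos := Real.two_pi_pos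
  continuous := contDiff_sphPt.continuous.subtype_mk _
  periodic t := Subtype.ext (sphPt_periodic t)
  exists_eq a b c d hab hbc hcd hda α β := by
    have hcont : Continuous fun x : closedBall (0 : E2) 1 ↦ toComplex x :=
      toComplex.continuous.comp continuous_subtype_val
    have hnorm (x : closedBall (0 : E2) 1) : ‖toComplex x‖ ≤ 1 := by
      simpa only [LinearIsometryEquiv.norm_map] using mem_closedBall_zero_iff.1 x.2
    obtain ⟨s, t, hst⟩ := exists_path_eq_path_of_interlaced hab hbc hcd hda
      ((α.map hcont).cast (toComplex_sphPt a).symm (toComplex_sphPt c).symm)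
      ((β.map hcont).cast (toComplex_sphPt b).symm (toComplex_sphPt d).symm)
      (fun s ↦ hnorm (α s)) (fun t ↦ hnorm (β t))
    exact ⟨s, t, Subtype.ext (toComplex.injective hst)⟩

theorem card_add_one_le_encard_of_sphPt {ι : Type*} [Finite ι] {f : E2 → ℝ}
    (hf : Continuous f) (p : ι → ℝ) (hinj : Function.Injective fun i ↦ f (sphPt (p i)))
    (hp : ∀ i, ∀ᶠ s in 𝓝[≠] p i, f (sphPt s) < f (sphPt (p i)))
    (hmax : ∀ x ∈ sphere (0 : E2) 1, ¬ IsLocalMaxOn f (closedBall 0 1) x)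
    (hmin : ∀ x ∈ sphere (0 : E2) 1, ¬ IsLocalMinOn f (closedBall 0 1) x) :
    ENat.card ι + 1 ≤ {x ∈ ball (0 : E2) 1 | IsLocalMax f x}.encard +
      {x ∈ ball (0 : E2) 1 | IsLocalMin f x}.encard := by
  have : LocallyPathConnectedSpace (closedBall (0 : E2) 1) :=
    (convex_closedBall 0 1).locallyPathConnectedSpace
  exact (card_add_one_le_encard_isLocalMax_add_encard_isLocalMin
    (hf.comp continuous_subtype_val) isInterlacingLoop_sphPt p hinj hp).trans
    (add_le_add (encard_isLocalMax_closedBall_le hmax) (encard_isLocalMin_closedBall_le hmin))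

end Disk

section PolarCoordinates

lemma norm_smul_sphPt_arg (x : E2) : ‖x‖ • sphPt (Complex.arg (toComplex x)) = x := by
  apply toComplex.injective
  rw [map_smul, toComplex_sphPt, Complex.real_smul, ← toComplex.norm_map,
    Complex.norm_mul_exp_arg_mul_I]

lemma exists_sphPt_eq {x : E2} (hx : ‖x‖ = 1) : ∃ t, sphPt t = x :=
  ⟨_, by simpa only [hx, one_smul] using norm_smul_sphPt_arg x⟩

end PolarCoordinates

section PeriodicFunctions

lemma eq_of_coe_angle_eq {β : Type*} {u : ℝ → β} (hu : Function.Periodic u (2 * Real.pi)) {s t : ℝ}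
    (h : (s : Real.Angle) = t) : u s = u t :=
  congrArg hu.lift h

lemma periodic_deriv {u : ℝ → ℝ} {c : ℝ} (hu : Function.Periodic u c) :
    Function.Periodic (deriv u) c := fun t ↦ by
  rw [← deriv_comp_add_const, funext hu]

end PeriodicFunctions

section SecondDerivative

open Filter Topology

variable {u : ℝ → ℝ} {p : ℝ}

lemma eventually_lt_of_deriv_deriv_neg (h₂ : deriv (deriv u) p < 0) (h₁ : deriv u p = 0)
    (hu : ContinuousAt u p) : ∀ᶠ s in 𝓝[≠] p, u s < u p := by
  have hmax : ∀ᶠ s in 𝓝 p, u s ≤ u p := isLocalMax_of_deriv_deriv_neg h₂ h₁ hu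
  have hcrit : ∀ᶠ s in 𝓝[≠] p, deriv u s ≠ 0 :=
    (differentiableAt_of_deriv_ne_zero h₂.ne).hasDerivAt.eventually_ne h₂.ne
  filter_upwards [hcrit, nhdsWithin_le_nhds (eventually_eventually_nhds.2 hmax)] with s hs hmaxs
  refine lt_of_le_of_ne hmaxs.self_of_nhds fun heq ↦ hs ?_
  exact IsLocalMax.deriv_eq_zero (hmaxs.mono fun y hy ↦ hy.trans_eq heq.symm)

lemma deriv_deriv_nonpos_of_isLocalMax (h : IsLocalMax u p) (hu : ContinuousAt u p) :
    deriv (deriv u) p ≤ 0 := by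
  by_contra! h₂
  have hlt : ∀ᶠ s in 𝓝[≠] p, (-u) s < (-u) p :=
    eventually_lt_of_deriv_deriv_neg (by simpa [deriv.neg'] using h₂)
      (by simpa [deriv.neg'] using h.deriv_eq_zero) hu.neg
  obtain ⟨s, hs, hs'⟩ := (hlt.and (nhdsWithin_le_nhds h)).exists
  exact (neg_lt_neg_iff.1 hs).not_ge hs'

end SecondDerivative

section CriticalPoints

open Filter Metric Topology

lemma encard_isLocalMax_add_encard_isLocalMin_le_encard_critPts (f : E2 → ℝ) :
    {x ∈ ball (0 : E2) 1 | IsLocalMax f x}.encard + {x ∈ ball (0 : E2) 1 | IsLocalMin f x}.encard ≤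
      (critPts f).encard := by
  obtain hinf | hfin := (critPts f).finite_or_infinite.symm
  · simp [hinf.encard_eq]
  have hdisj : Disjoint {x ∈ ball (0 : E2) 1 | IsLocalMax f x}
      {x ∈ ball (0 : E2) 1 | IsLocalMin f x} := by
    refine Set.disjoint_left.2 fun x ⟨hx, hmax⟩ ⟨_, hmin⟩ ↦ ?_
    have hconst : f =ᶠ[𝓝 x] fun _ ↦ f x := by
      filter_upwards [hmax, hmin] with y using le_antisymm
    have hcrit : ∀ᶠ y in 𝓝 x, y ∈ critPts f := by
      filter_upwards [hconst.eventuallyEq_nhds, isOpen_ball.mem_nhds hx] with y hy hyball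
      exact ⟨hyball, by rw [hy.fderiv_eq, hasFDerivAt_const _ _ |>.fderiv]⟩
    exact infinite_of_mem_nhds x hcrit hfin
  rw [← Set.encard_union_eq hdisj]
  exact Set.encard_le_encard (Set.union_subset (fun x hx ↦ ⟨hx.1, hx.2.fderiv_eq_zero⟩)
    fun x hx ↦ ⟨hx.1, hx.2.fderiv_eq_zero⟩)

lemma not_isLocalMaxOn_closedBall_of_fderiv_neg {E : Type*} [NormedAddCommGroup E]
    [NormedSpace ℝ E] {f : E → ℝ} {r : ℝ} {p : E} (hp : ‖p‖ ≤ r) (hf : fderiv ℝ f p p < 0) :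
    ¬ IsLocalMaxOn f (closedBall 0 r) p := by
  intro hmax
  have hdiff : DifferentiableAt ℝ f p := by
    by_contra h
    simp [fderiv_zero_of_not_differentiableAt h] at hf
  have hcone : 0 - p ∈ posTangentConeAt (closedBall (0 : E) r) p :=
    sub_mem_posTangentConeAt_of_segment_subset <| (convex_closedBall 0 r).segment_subset
      (by simpa using hp) (by simpa using (norm_nonneg p).trans hp)
  have := hmax.hasFDerivWithinAt_nonpos hdiff.hasFDerivAt.hasFDerivWithinAt hcone
  rw [zero_sub, map_neg] at this
  linarith

lemma critPts_neg (f : E2 → ℝ) : critPts (-f) = critPts f := by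
  simp only [critPts, fderiv_neg, neg_eq_zero]

end CriticalPoints

section Ribbons

open Metric Topology

variable {n : ℕ}

/-- The ribbon of `-φ`, with the same nodes and the same marking: local maxima and local minima are
exchanged. -/
instance : InvolutiveNeg (Ribbon n) where
  neg a :=
    { a with
      g := -a.g
      smooth_g := a.smooth_g.neg
      periodic_g := fun t ↦ congrArg Neg.neg (a.periodic_g t)
      node_crit := fun i ↦ by rw [deriv.neg, a.node_crit, neg_zero]
      node_nondeg := fun i ↦ by
        simpa only [deriv.neg', deriv.fun_neg, neg_ne_zero] using a.node_nondeg i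
      crit_only := fun t ht h ↦ a.crit_only t ht (by rwa [deriv.neg, neg_eq_zero] at h)
      values_distinct := fun i j h ↦ a.values_distinct i j (neg_injective h) }
  neg_neg a := by
    cases a
    simp only [neg_neg]

namespace Ribbon

/-- The nodes of `a` that are local maxima. -/
def maxNodes (a : Ribbon n) : Set (Fin n) := {i | deriv (deriv a.g) (a.θ i) < 0}

lemma deriv_deriv_neg_g (a : Ribbon n) (t : ℝ) : deriv (deriv (-a).g) t = -deriv (deriv a.g) t := by
  change deriv (deriv (-a.g)) t = _
  rw [deriv.neg', deriv.fun_neg]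

lemma maxNodes_neg (a : Ribbon n) : (-a).maxNodes = a.maxNodesᶜ := by
  ext i
  have hne := a.node_nondeg i
  change deriv (deriv (-a).g) (a.θ i) < 0 ↔ ¬ deriv (deriv a.g) (a.θ i) < 0
  rw [deriv_deriv_neg_g, neg_lt_zero, not_lt]
  exact ⟨le_of_lt, fun h ↦ h.lt_of_ne' hne⟩

lemma exists_angle_eq_node (a : Ribbon n) {t : ℝ} (ht : deriv a.g t = 0) :
    ∃ i, (t : Real.Angle) = a.θ i := by
  have hmod : ((toIcoMod Real.two_pi_pos 0 t : ℝ) : Real.Angle) = t :=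
    Real.Angle.coe_toIcoMod t 0
  have hper : Function.Periodic (deriv a.g) (2 * Real.pi) := periodic_deriv a.periodic_g
  obtain ⟨i, hi⟩ := a.crit_only (toIcoMod Real.two_pi_pos 0 t)
    (by simpa only [zero_add] using toIcoMod_mem_Ico Real.two_pi_pos 0 t)
    (by rw [eq_of_coe_angle_eq hper hmod, ht])
  exact ⟨i, by rw [← hmod, hi]⟩

end Ribbon

namespace IsExtension

variable {a : Ribbon n} {f : E2 → ℝ}

lemma neg (hf : IsExtension a f) : IsExtension (-a) (-f) := by
  obtain ⟨hsmooth, hbd, hsphere, hrad⟩ := hf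
  refine ⟨hsmooth.neg, fun t ↦ congrArg Neg.neg (hbd t), fun x hx ↦ ?_, fun i ↦ ?_⟩
  · simpa only [fderiv_neg, ne_eq, neg_eq_zero] using hsphere x hx
  · have hi := hrad i
    rw [Ribbon.deriv_deriv_neg_g, neg_lt_zero, neg_pos]
    rw [inner_gradient_left] at hi ⊢
    rw [fderiv_neg, neg_apply, mul_neg, neg_pos, neg_lt_zero]
    exact hi.symm

lemma isLocalMax_g (hf : IsExtension a f) {t : ℝ} (h : IsLocalMaxOn f (closedBall 0 1) (sphPt t)) :
    IsLocalMax a.g t := by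
  have hcomp := h.comp_continuousOn (s := Set.univ) (fun s _ ↦ sphPt_mem_closedBall s)
    contDiff_sphPt.continuous.continuousOn (Set.mem_univ t)
  rwa [isLocalMaxOn_univ_iff, show f ∘ sphPt = a.g from funext hf.2.1] at hcomp

lemma not_isLocalMaxOn_sphere (hf : IsExtension a f) (hneg : ∀ i, a.ν i = -1) {x : E2}
    (hx : x ∈ sphere 0 1) : ¬ IsLocalMaxOn f (closedBall 0 1) x := by
  intro hmax
  obtain ⟨t, rfl⟩ := exists_sphPt_eq (mem_sphere_zero_iff_norm.1 hx)
  obtain ⟨i, hi⟩ := a.exists_angle_eq_node (hf.isLocalMax_g hmax).deriv_eq_zero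
  rw [eq_of_coe_angle_eq sphPt_periodic hi] at hmax
  have hle := deriv_deriv_nonpos_of_isLocalMax (hf.isLocalMax_g hmax)
    a.smooth_g.continuous.continuousAt
  have hrad := (hf.2.2.2 i).1 (hle.lt_of_ne (a.node_nondeg i))
  rw [hneg i, inner_gradient_left] at hrad
  push_cast at hrad
  exact not_isLocalMaxOn_closedBall_of_fderiv_neg (norm_sphPt _).le (by linarith) hmax

lemma not_isLocalMinOn_sphere (hf : IsExtension a f) (hneg : ∀ i, a.ν i = -1) {x : E2}
    (hx : x ∈ sphere 0 1) : ¬ IsLocalMinOn f (closedBall 0 1) x :=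
  fun hmin ↦ hf.neg.not_isLocalMaxOn_sphere hneg hx hmin.neg

theorem ncard_maxNodes_add_one_le_encard_critPts (hf : IsExtension a f) (hneg : ∀ i, a.ν i = -1) :
    (a.maxNodes.ncard : ℕ∞) + 1 ≤ (critPts f).encard := by
  rw [(Set.toFinite _).cast_ncard_eq]
  refine (card_add_one_le_encard_of_sphPt hf.1.continuous (fun i : a.maxNodes ↦ a.θ i) ?_ ?_
    (fun _ ↦ hf.not_isLocalMaxOn_sphere hneg) fun _ ↦ hf.not_isLocalMinOn_sphere hneg).trans
    (encard_isLocalMax_add_encard_isLocalMin_le_encard_critPts f)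
  · exact fun i j hij ↦ Subtype.ext (a.values_distinct i j (by simpa only [hf.2.1] using hij))
  · intro i
    simp only [hf.2.1]
    exact eventually_lt_of_deriv_deriv_neg i.2 (a.node_crit i) a.smooth_g.continuous.continuousAt

end IsExtension

end Ribbons

section PolarLift

open Filter Topology

lemma arg_toComplex_smul_sphPt {r : ℝ} (hr : 0 < r) (t : ℝ) :
    (Complex.arg (toComplex (r • sphPt t)) : Real.Angle) = t := by
  rw [map_smul, toComplex_sphPt, Complex.exp_mul_I, Complex.real_smul]
  exact_mod_cast Complex.arg_mul_cos_add_sin_mul_I_coe_angle hr t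

lemma norm_smul_sphPt {r : ℝ} (hr : 0 ≤ r) (t : ℝ) : ‖r • sphPt t‖ = r := by
  rw [norm_smul, norm_sphPt, mul_one, Real.norm_of_nonneg hr]

lemma sphPt_eq_cos_smul_add_sin_smul (t s : ℝ) :
    sphPt s = Real.cos (s - t) • sphPt t + Real.sin (s - t) • sphPt (t + Real.pi / 2) := by
  ext i
  fin_cases i
  · simpa [sphPt, Real.cos_add_pi_div_two, Real.sin_add_pi_div_two, sub_eq_add_neg] using
      Real.cos_add (s - t) t
  · simpa [sphPt, Real.cos_add_pi_div_two, Real.sin_add_pi_div_two, add_comm] using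
      Real.sin_add (s - t) t

lemma hasDerivAt_sphPt (t : ℝ) : HasDerivAt sphPt (sphPt (t + Real.pi / 2)) t := by
  have hsub : HasDerivAt (fun s ↦ s - t) 1 t := (hasDerivAt_id t).sub_const t
  have hrot := (hsub.cos.smul_const (sphPt t)).fun_add
    (hsub.sin.smul_const (sphPt (t + Real.pi / 2)))
  rw [show sphPt = _ from funext (sphPt_eq_cos_smul_add_sin_smul t)]
  simpa using hrot

lemma eq_zero_of_sphPt_of_sphPt_add {L : E2 →L[ℝ] ℝ} {t : ℝ} (h : L (sphPt t) = 0)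
    (h' : L (sphPt (t + Real.pi / 2)) = 0) : L = 0 := by
  ext x
  rw [← norm_smul_sphPt_arg x, map_smul, sphPt_eq_cos_smul_add_sin_smul t, map_add, map_smul,
    map_smul, h, h']
  simp

lemma contDiffAt_arg {z : ℂ} (hz : z ∈ Complex.slitPlane) {k : WithTop ℕ∞} :
    ContDiffAt ℝ k Complex.arg z := by
  simpa only [Function.comp_def, Complex.imCLM_apply, Complex.log_im] using
    Complex.imCLM.contDiff.contDiffAt.comp z ((Complex.contDiffAt_log hz).restrict_scalars ℝ)

/-- The function on the plane with value `F (r ^ 2) t` at `r • sphPt t`. It is the square of the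
radius that enters `F`, so that a lift that is radial near the origin is smooth there. -/
def polarLift (F : ℝ → ℝ → ℝ) (x : E2) : ℝ := F (‖x‖ ^ 2) (Complex.arg (toComplex x))

variable {F : ℝ → ℝ → ℝ}

lemma polarLift_smul_sphPt (hF : ∀ s, Function.Periodic (F s) (2 * Real.pi)) {r : ℝ} (hr : 0 < r)
    (t : ℝ) : polarLift F (r • sphPt t) = F (r ^ 2) t := by
  rw [polarLift, norm_smul_sphPt hr.le]
  exact eq_of_coe_angle_eq (hF _) (arg_toComplex_smul_sphPt hr t)

lemma contDiffAt_polarLift {k : WithTop ℕ∞} (hF : ContDiff ℝ k (Function.uncurry F))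
    (hper : ∀ s, Function.Periodic (F s) (2 * Real.pi)) {x : E2} (hx : x ≠ 0) :
    ContDiffAt ℝ k (polarLift F) x := by
  set z := toComplex x with hz
  have hz0 : z ≠ 0 := by simpa [hz] using hx
  have hinv : z⁻¹ ≠ 0 := inv_ne_zero hz0
  have hrot : polarLift F =ᶠ[𝓝 x]
      fun y ↦ F (‖y‖ ^ 2) (Complex.arg (z⁻¹ * toComplex y) + Complex.arg z) := by
    filter_upwards [isOpen_ne.mem_nhds hx] with y hy
    refine eq_of_coe_angle_eq (hper _) ?_
    rw [Real.Angle.coe_add, Complex.arg_mul_coe_angle hinv (by simpa using hy),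
      Complex.arg_inv_coe_angle, neg_add_cancel_comm]
  have harg : ContDiffAt ℝ k (fun y ↦ Complex.arg (z⁻¹ * toComplex y)) x :=
    (contDiffAt_arg (by rw [← hz, inv_mul_cancel₀ hz0]; exact Complex.one_mem_slitPlane)).comp x
      (contDiffAt_const.mul toComplex.contDiff.contDiffAt)
  exact ContDiffAt.congr_of_eventuallyEq (hF.contDiffAt.comp x
    ((contDiff_norm_sq ℝ).contDiffAt.prodMk (harg.add contDiffAt_const))) hrot

lemma polarLift_eventuallyEq (h0 : ∀ᶠ s in 𝓝 0, ∀ t, F s t = F s 0) :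
    polarLift F =ᶠ[𝓝 0] fun x ↦ F (‖x‖ ^ 2) 0 := by
  have hlim : Tendsto (fun x : E2 ↦ ‖x‖ ^ 2) (𝓝 0) (𝓝 0) := by
    simpa using (contDiff_norm_sq ℝ (n := 0) (E := E2)).continuous.tendsto 0
  filter_upwards [hlim h0] with x hx using hx _

lemma contDiff_polarLift {k : WithTop ℕ∞} (hF : ContDiff ℝ k (Function.uncurry F))
    (hper : ∀ s, Function.Periodic (F s) (2 * Real.pi))
    (h0 : ∀ᶠ s in 𝓝 0, ∀ t, F s t = F s 0) : ContDiff ℝ k (polarLift F) := by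
  refine contDiff_iff_contDiffAt.2 fun x ↦ ?_
  obtain rfl | hx := eq_or_ne x 0
  · exact ContDiffAt.congr_of_eventuallyEq (hF.contDiffAt.comp (0 : E2)
      ((contDiff_norm_sq ℝ).contDiffAt.prodMk contDiffAt_const)) (polarLift_eventuallyEq h0)
  · exact contDiffAt_polarLift hF hper hx

lemma fderiv_polarLift_zero (h0 : ∀ᶠ s in 𝓝 0, ∀ t, F s t = F s 0)
    (hF : DifferentiableAt ℝ (fun s ↦ F s 0) 0) : fderiv ℝ (polarLift F) 0 = 0 := by
  have hsq : HasFDerivAt (fun x : E2 ↦ ‖x‖ ^ 2) (0 : E2 →L[ℝ] ℝ) 0 := by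
    simpa using (hasStrictFDerivAt_norm_sq (0 : E2)).hasFDerivAt
  have hF' : HasDerivAt (fun s ↦ F s 0) (deriv (fun s ↦ F s 0) 0) (‖(0 : E2)‖ ^ 2) := by
    simpa only [norm_zero, zero_pow two_ne_zero] using hF.hasDerivAt
  rw [(polarLift_eventuallyEq h0).fderiv_eq]
  simpa only [Function.comp_def, smul_zero] using (hF'.comp_hasFDerivAt 0 hsq).fderiv

variable {F' r t : ℝ}

lemma fderiv_polarLift_sphPt (hper : ∀ s, Function.Periodic (F s) (2 * Real.pi)) (hr : 0 < r)
    (hf : DifferentiableAt ℝ (polarLift F) (r • sphPt t))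
    (hF : HasDerivAt (fun s ↦ F s t) F' (r ^ 2)) :
    fderiv ℝ (polarLift F) (r • sphPt t) (sphPt t) = 2 * r * F' := by
  have hray : HasDerivAt (fun r : ℝ ↦ r • sphPt t) (sphPt t) r := by
    simpa using (hasDerivAt_id r).smul_const (sphPt t)
  have hsq : HasDerivAt (fun r : ℝ ↦ F (r ^ 2) t) (2 * r * F') r := by
    simpa [Function.comp_def, mul_comm] using hF.comp_of_eq r (hasDerivAt_pow 2 r) rfl
  refine (hf.hasFDerivAt.comp_hasDerivAt r hray).unique (hsq.congr_of_eventuallyEq ?_)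
  filter_upwards [lt_mem_nhds hr] with r' hr' using polarLift_smul_sphPt hper hr' t

lemma fderiv_polarLift_smul_sphPt_add (hper : ∀ s, Function.Periodic (F s) (2 * Real.pi))
    (hr : 0 < r) (hf : DifferentiableAt ℝ (polarLift F) (r • sphPt t))
    (hF : HasDerivAt (F (r ^ 2)) F' t) :
    fderiv ℝ (polarLift F) (r • sphPt t) (r • sphPt (t + Real.pi / 2)) = F' := by
  refine (hf.hasFDerivAt.comp_hasDerivAt t ((hasDerivAt_sphPt t).const_smul r)).unique ?_
  rwa [show polarLift F ∘ (r • sphPt) = F (r ^ 2) from funext (polarLift_smul_sphPt hper hr)]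

lemma fderiv_polarLift_eq_zero_iff {Fs Ft : ℝ}
    (hper : ∀ s, Function.Periodic (F s) (2 * Real.pi)) (hr : 0 < r)
    (hf : DifferentiableAt ℝ (polarLift F) (r • sphPt t))
    (hs : HasDerivAt (fun s ↦ F s t) Fs (r ^ 2)) (ht : HasDerivAt (F (r ^ 2)) Ft t) :
    fderiv ℝ (polarLift F) (r • sphPt t) = 0 ↔ Fs = 0 ∧ Ft = 0 := by
  have hradial := fderiv_polarLift_sphPt hper hr hf hs
  have hangular := fderiv_polarLift_smul_sphPt_add hper hr hf ht
  refine ⟨fun h ↦ ?_, fun ⟨hs0, ht0⟩ ↦ ?_⟩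
  · rw [h, zero_apply] at hradial hangular
    exact ⟨(mul_eq_zero.1 hradial.symm).resolve_left (by positivity), hangular.symm⟩
  · rw [map_smul, ht0, smul_eq_mul] at hangular
    exact eq_zero_of_sphPt_of_sphPt_add (by rw [hradial, hs0, mul_zero])
      ((mul_eq_zero.1 hangular).resolve_left hr.ne')

end PolarLift

section Collar

open Set

-- `w = -u' + u * q` with `q = u' * u'' / (u ^ 2 + u' ^ 2)`: modulo `u`, this `q` is `u'' / u'`.
lemma exists_deriv_eq_mul {u : ℝ → ℝ} {c : ℝ} (hu : ContDiff ℝ (⊤ : ℕ∞) u)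
    (hper : Function.Periodic u c) (hne : ∀ t, u t = 0 → deriv u t ≠ 0) :
    ∃ w v : ℝ → ℝ, ContDiff ℝ (⊤ : ℕ∞) w ∧ Function.Periodic w c ∧ Continuous v ∧
      Function.Periodic v c ∧ (∀ t, deriv w t = u t * v t) ∧ ∀ t, u t = 0 → w t = -deriv u t := by
  have hsmooth {y : ℝ → ℝ} (hy : ContDiff ℝ (⊤ : ℕ∞) y) : ContDiff ℝ (⊤ : ℕ∞) (deriv y) :=
    (contDiff_infty_iff_deriv.1 hy).2
  have hderiv {y : ℝ → ℝ} (hy : ContDiff ℝ (⊤ : ℕ∞) y) (t : ℝ) : HasDerivAt y (deriv y t) t :=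
    (hy.differentiable (by simp) t).hasDerivAt
  set u' := deriv u
  set u'' := deriv u'
  have hD (t : ℝ) : u t ^ 2 + u' t ^ 2 ≠ 0 := by
    by_cases h : u t = 0
    · have := hne t h
      positivity
    · positivity
  have hu' : ContDiff ℝ (⊤ : ℕ∞) u' := hsmooth hu
  have hu'' : ContDiff ℝ (⊤ : ℕ∞) u'' := hsmooth hu'
  have hper' : Function.Periodic u' c := periodic_deriv hper
  have hper'' : Function.Periodic u'' c := periodic_deriv hper'
  set q : ℝ → ℝ := fun t ↦ u' t * u'' t / (u t ^ 2 + u' t ^ 2) with hq_def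
  have hq : ContDiff ℝ (⊤ : ℕ∞) q := (hu'.mul hu'').div ((hu.pow 2).add (hu'.pow 2)) hD
  have hperq : Function.Periodic q c := fun t ↦ by simp only [hq_def, hper t, hper' t, hper'' t]
  refine ⟨fun t ↦ -u' t + u t * q t, fun t ↦ deriv q t - u'' t * u t / (u t ^ 2 + u' t ^ 2),
    hu'.neg.add (hu.mul hq), fun t ↦ by simp only [hper t, hper' t, hperq t], ?_,
    fun t ↦ by simp only [hper t, hper' t, hper'' t, periodic_deriv hperq t], fun t ↦ ?_,
    fun t ht ↦ by simp only [ht, zero_mul, add_zero]⟩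
  · exact (hsmooth hq).continuous.sub ((hu''.continuous.mul hu.continuous).div
      ((hu.pow 2).add (hu'.pow 2)).continuous hD)
  · refine ((hderiv hu' t).neg.add ((hderiv hu t).mul (hderiv hq t))).deriv.trans ?_
    have := hD t
    simp only [hq_def]
    field_simp
    ring

lemma exists_periodic_abs_deriv_le {u : ℝ → ℝ} {c : ℝ} (hc : c ≠ 0)
    (hu : ContDiff ℝ (⊤ : ℕ∞) u) (hper : Function.Periodic u c)
    (hne : ∀ t, u t = 0 → deriv u t ≠ 0) :
    ∃ h : ℝ → ℝ, ContDiff ℝ (⊤ : ℕ∞) h ∧ Function.Periodic h c ∧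
      (∀ t, |deriv h t| ≤ |u t| / 2) ∧ ∀ t, u t = 0 → h t * deriv u t < 0 := by
  obtain ⟨w, v, hw, hperw, hv, hperv, hw', hwu⟩ := exists_deriv_eq_mul hu hper hne
  obtain ⟨C, hC, hvC⟩ := (hperv.isBounded_of_continuous hc hv).exists_pos_norm_le
  refine ⟨fun t ↦ (2 * C)⁻¹ * w t, contDiff_const.mul hw, fun t ↦ by simp only [hperw t],
    fun t ↦ ?_, fun t ht ↦ ?_⟩
  · rw [deriv_const_mul _ (hw.differentiable (by simp) t), hw', abs_mul, abs_mul,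
      abs_of_pos (by positivity)]
    calc (2 * C)⁻¹ * (|u t| * |v t|) ≤ (2 * C)⁻¹ * (|u t| * C) := by
          gcongr
          exact hvC _ (mem_range_self t)
      _ = |u t| / 2 := by field_simp
  · have hpos : 0 < (2 * C)⁻¹ * deriv u t ^ 2 := by
      have := hne t ht
      positivity
    simp only [hwu t ht]
    linarith

/-- A smooth step from `0` on `s ≤ 1 / 2` to `1` on `3 / 4 ≤ s`. -/
def cutoff (s : ℝ) : ℝ := Real.smoothTransition (4 * s - 2)

lemma contDiff_cutoff : ContDiff ℝ (⊤ : ℕ∞) cutoff :=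
  Real.smoothTransition.contDiff.comp ((contDiff_const.mul contDiff_id).sub contDiff_const)

lemma cutoff_of_le {s : ℝ} (hs : s ≤ 1 / 2) : cutoff s = 0 :=
  Real.smoothTransition.zero_of_nonpos (by linarith)

lemma cutoff_of_ge {s : ℝ} (hs : 3 / 4 ≤ s) : cutoff s = 1 :=
  Real.smoothTransition.one_of_one_le (by linarith)

lemma deriv_cutoff_of_ge {s : ℝ} (hs : 3 / 4 ≤ s) : deriv cutoff s = 0 := by
  have hmax : IsLocalMax cutoff s := Filter.Eventually.of_forall fun x ↦ by
    rw [cutoff_of_ge hs]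
    exact Real.smoothTransition.le_one _
  exact hmax.deriv_eq_zero

/-- The function of `s = r ^ 2` and the angle `t` whose lift is an extension with few critical
points: equal to `g` for `s = 1`, with outward derivative `-2 * h` there, and dominated by the
paraboloid `-K * (1 - s) ^ 2` away from the circle. -/
def profile (g h : ℝ → ℝ) (K s t : ℝ) : ℝ := cutoff s * (g t + (1 - s) * h t) - K * (1 - s) ^ 2

/-- The conditions on `h` and `K` under which the lift of `profile g h K` is critical in the closed
unit disk only at the origin and along the rays through the critical points of `g`. -/
structure IsCollar (g h : ℝ → ℝ) (K : ℝ) : Prop where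
  contDiff_left : ContDiff ℝ (⊤ : ℕ∞) g
  contDiff_right : ContDiff ℝ (⊤ : ℕ∞) h
  periodic_left : Function.Periodic g (2 * Real.pi)
  periodic_right : Function.Periodic h (2 * Real.pi)
  abs_deriv_le : ∀ t, |deriv h t| ≤ |deriv g t| / 2
  mul_deriv_deriv_neg : ∀ t, deriv g t = 0 → h t * deriv (deriv g) t < 0
  abs_radial_lt : ∀ s ∈ Icc (0 : ℝ) 1, ∀ t,
    |deriv cutoff s * (g t + (1 - s) * h t) - cutoff s * h t| < K / 2

lemma exists_isCollar {g : ℝ → ℝ} (hg : ContDiff ℝ (⊤ : ℕ∞) g)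
    (hper : Function.Periodic g (2 * Real.pi)) (hne : ∀ t, deriv g t = 0 → deriv (deriv g) t ≠ 0) :
    ∃ h K, IsCollar g h K := by
  obtain ⟨h, hh, hperh, hle, hsign⟩ := exists_periodic_abs_deriv_le Real.two_pi_pos.ne'
    (contDiff_infty_iff_deriv.1 hg).2 (periodic_deriv hper) hne
  have hcomp : IsCompact (range fun t ↦ (g t, h t)) :=
    Function.Periodic.compact_of_continuous (fun t ↦ congrArg₂ Prod.mk (hper t) (hperh t))
      Real.two_pi_pos.ne' (hg.continuous.prodMk hh.continuous)
  have hcutoff : Continuous (deriv cutoff) :=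
    (contDiff_infty_iff_deriv.1 contDiff_cutoff).2.continuous
  have hcont : Continuous fun x : ℝ × ℝ × ℝ ↦
      deriv cutoff x.1 * (x.2.1 + (1 - x.1) * x.2.2) - cutoff x.1 * x.2.2 := by
    have := contDiff_cutoff.continuous
    fun_prop
  obtain ⟨C, hC⟩ := ((isCompact_Icc (a := (0 : ℝ)) (b := 1)).prod
    hcomp).exists_bound_of_continuousOn hcont.continuousOn
  refine ⟨h, 2 * (C + 1), ⟨hg, hh, hper, hperh, hle, hsign, fun s hs t ↦ ?_⟩⟩
  have hst := hC (s, g t, h t) ⟨hs, mem_range_self t⟩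
  rw [Real.norm_eq_abs] at hst
  linarith

end Collar

section CollarLift

open Filter Metric Topology

/-- The radius of the critical point on the ray through a critical point `t` of `g` with
`0 < h t`. -/
def critRadius (h : ℝ → ℝ) (K t : ℝ) : ℝ := √(1 - h t / (2 * K))

namespace IsCollar

variable {g h : ℝ → ℝ} {K : ℝ}

lemma periodic_profile (H : IsCollar g h K) (s : ℝ) :
    Function.Periodic (profile g h K s) (2 * Real.pi) := fun t ↦ by
  simp only [profile, H.periodic_left t, H.periodic_right t]

lemma hasDerivAt_profile_left (g h : ℝ → ℝ) (K s t : ℝ) : HasDerivAt (fun s ↦ profile g h K s t)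
    (deriv cutoff s * (g t + (1 - s) * h t) - cutoff s * h t + 2 * K * (1 - s)) s := by
  have hcutoff : HasDerivAt cutoff (deriv cutoff s) s :=
    (contDiff_cutoff.differentiable (by simp) s).hasDerivAt
  have hsub : HasDerivAt (fun s : ℝ ↦ 1 - s) (-1) s := by simpa using (hasDerivAt_id s).const_sub 1
  refine ((hcutoff.mul ((hsub.mul_const (h t)).const_add (g t))).sub
    ((hsub.pow 2).const_mul K)).congr_deriv ?_
  push_cast
  ring

lemma hasDerivAt_profile_right (H : IsCollar g h K) (s t : ℝ) :
    HasDerivAt (profile g h K s) (cutoff s * (deriv g t + (1 - s) * deriv h t)) t :=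
  (((H.contDiff_left.differentiable (by simp) t).hasDerivAt.add
    ((H.contDiff_right.differentiable (by simp) t).hasDerivAt.const_mul _)).const_mul _).sub_const _

lemma eventually_profile_eq (g h : ℝ → ℝ) (K : ℝ) :
    ∀ᶠ s in 𝓝 0, ∀ t, profile g h K s t = profile g h K s 0 := by
  filter_upwards [gt_mem_nhds (show (0 : ℝ) < 1 / 2 by norm_num)] with s hs t
  simp only [profile, cutoff_of_le hs.le, zero_mul]

lemma contDiff_polarLift_profile (H : IsCollar g h K) :
    ContDiff ℝ (⊤ : ℕ∞) (polarLift (profile g h K)) := by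
  refine contDiff_polarLift ?_ H.periodic_profile (eventually_profile_eq g h K)
  have hsub : ContDiff ℝ (⊤ : ℕ∞) fun x : ℝ × ℝ ↦ 1 - x.1 := contDiff_const.sub contDiff_fst
  exact ((contDiff_cutoff.comp contDiff_fst).mul ((H.contDiff_left.comp contDiff_snd).add
    (hsub.mul (H.contDiff_right.comp contDiff_snd)))).sub (contDiff_const.mul (hsub.pow 2))

lemma polarLift_profile_sphPt (H : IsCollar g h K) (t : ℝ) :
    polarLift (profile g h K) (sphPt t) = g t := by
  rw [← one_smul ℝ (sphPt t), polarLift_smul_sphPt H.periodic_profile one_pos, profile, one_pow,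
    cutoff_of_ge (by norm_num)]
  ring

lemma fderiv_polarLift_profile_sphPt (H : IsCollar g h K) (t : ℝ) :
    fderiv ℝ (polarLift (profile g h K)) (sphPt t) (sphPt t) = -2 * h t := by
  have hradial := fderiv_polarLift_sphPt H.periodic_profile one_pos
    (H.contDiff_polarLift_profile.differentiable (by simp) ((1 : ℝ) • sphPt t))
    (hasDerivAt_profile_left g h K (1 ^ 2) t)
  rw [one_smul] at hradial
  rw [hradial, one_pow, cutoff_of_ge (by norm_num), deriv_cutoff_of_ge (by norm_num)]
  ring

lemma abs_right_lt (H : IsCollar g h K) (t : ℝ) : |h t| < K / 2 := by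
  simpa [cutoff_of_ge, deriv_cutoff_of_ge, show (3 / 4 : ℝ) ≤ 1 by norm_num] using
    H.abs_radial_lt 1 (by simp) t

lemma pos (H : IsCollar g h K) : 0 < K := by
  linarith [abs_nonneg (h 0), H.abs_right_lt 0]

lemma partialDerivs_eq_zero_iff (H : IsCollar g h K) {s t : ℝ} (hs : s ∈ Set.Icc 0 1) :
    deriv cutoff s * (g t + (1 - s) * h t) - cutoff s * h t + 2 * K * (1 - s) = 0 ∧
      cutoff s * (deriv g t + (1 - s) * deriv h t) = 0 ↔
    deriv g t = 0 ∧ 2 * K * (1 - s) = h t := by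
  have hK := H.pos
  obtain hs' | hs' := lt_or_ge s (3 / 4)
  · have hfar : K / 2 < 2 * K * (1 - s) := by nlinarith
    have hlt := (abs_lt.1 (H.abs_radial_lt s hs t)).1
    have hlt' := (abs_lt.1 (H.abs_right_lt t)).2
    exact ⟨fun h0 ↦ by linarith [h0.1], fun h0 ↦ by linarith [h0.2]⟩
  · have hle : |(1 - s) * deriv h t| ≤ |deriv g t| / 2 := by
      rw [abs_mul, abs_of_nonneg (by linarith [hs.2])]
      nlinarith [H.abs_deriv_le t, abs_nonneg (deriv h t), hs.1]
    have hangular : deriv g t + (1 - s) * deriv h t = 0 ↔ deriv g t = 0 := by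
      refine ⟨fun h0 ↦ ?_, fun h0 ↦ ?_⟩
      · rw [eq_neg_of_add_eq_zero_right h0, abs_neg] at hle
        exact abs_nonpos_iff.1 (by linarith)
      · rw [h0, abs_zero, zero_div] at hle
        rw [h0, abs_nonpos_iff.1 hle, add_zero]
    rw [cutoff_of_ge hs', deriv_cutoff_of_ge hs', zero_mul, zero_sub, one_mul, one_mul, hangular,
      and_comm]
    exact and_congr_right fun _ ↦ ⟨fun h0 ↦ by linarith, fun h0 ↦ by linarith⟩

lemma fderiv_polarLift_profile_eq_zero_iff (H : IsCollar g h K) {r : ℝ} (hr : r ∈ Set.Ioc 0 1)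
    (t : ℝ) : fderiv ℝ (polarLift (profile g h K)) (r • sphPt t) = 0 ↔
      deriv g t = 0 ∧ 2 * K * (1 - r ^ 2) = h t := by
  rw [fderiv_polarLift_eq_zero_iff H.periodic_profile hr.1
    (H.contDiff_polarLift_profile.differentiable (by simp) _)
    (hasDerivAt_profile_left g h K _ t) (H.hasDerivAt_profile_right _ t),
    H.partialDerivs_eq_zero_iff ⟨sq_nonneg r, pow_le_one₀ hr.1.le hr.2⟩]

lemma critRadius_pos (H : IsCollar g h K) (t : ℝ) : 0 < critRadius h K t := by
  have hK := H.pos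
  have hlt : h t / (2 * K) < 1 := by
    rw [div_lt_one (by positivity)]
    linarith [le_abs_self (h t), H.abs_right_lt t]
  exact Real.sqrt_pos.2 (by linarith)

lemma two_mul_mul_one_sub_sq_eq_iff (H : IsCollar g h K) {r t : ℝ} (hr : 0 < r) :
    2 * K * (1 - r ^ 2) = h t ↔ r = critRadius h K t := by
  have hK := H.pos
  have hpos := H.critRadius_pos t
  rw [← sq_eq_sq₀ hr.le hpos.le, critRadius, Real.sq_sqrt (Real.sqrt_pos.1 hpos).le]
  constructor <;> intro heq
  · rw [← heq]
    field_simp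
    ring
  · rw [heq]
    field_simp
    ring

theorem critPts_polarLift_profile (H : IsCollar g h K) :
    critPts (polarLift (profile g h K)) =
      insert 0 ((fun t ↦ critRadius h K t • sphPt t) '' {t | deriv g t = 0 ∧ 0 < h t}) := by
  have hK := H.pos
  have hlt {r t : ℝ} (hr : 0 < r) (hrt : 2 * K * (1 - r ^ 2) = h t) : r < 1 ↔ 0 < h t := by
    rw [← hrt, mul_pos_iff_of_pos_left (by positivity), sub_pos, sq_lt_one_iff₀ hr.le]
  ext x
  rw [Set.mem_insert_iff, Set.mem_image]
  refine ⟨fun ⟨hx, hcrit⟩ ↦ or_iff_not_imp_left.2 fun hx0 ↦ ?_, ?_⟩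
  · have hr : 0 < ‖x‖ := norm_pos_iff.2 hx0
    have hr1 : ‖x‖ < 1 := mem_ball_zero_iff.1 hx
    rw [← norm_smul_sphPt_arg x, H.fderiv_polarLift_profile_eq_zero_iff ⟨hr, hr1.le⟩] at hcrit
    refine ⟨_, ⟨hcrit.1, (hlt hr hcrit.2).1 hr1⟩, ?_⟩
    rw [← (H.two_mul_mul_one_sub_sq_eq_iff hr).1 hcrit.2, norm_smul_sphPt_arg]
  · rintro (rfl | ⟨t, ⟨hg, ht⟩, rfl⟩)
    · exact ⟨mem_ball_self one_pos, fderiv_polarLift_zero (eventually_profile_eq g h K)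
        (hasDerivAt_profile_left g h K 0 0).differentiableAt⟩
    · have hr := H.critRadius_pos t
      have hrt := (H.two_mul_mul_one_sub_sq_eq_iff hr).2 rfl
      have hr1 := (hlt hr hrt).2 ht
      refine ⟨?_, (H.fderiv_polarLift_profile_eq_zero_iff ⟨hr, hr1.le⟩ t).2 ⟨hg, hrt⟩⟩
      rwa [mem_ball_zero_iff, norm_smul_sphPt hr.le]

end IsCollar

end CollarLift

section Construction

open Metric

variable {n : ℕ} {a : Ribbon n} {h : ℝ → ℝ} {K : ℝ}

lemma Ribbon.exists_isCollar (a : Ribbon n) :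
    ∃ h K, IsCollar a.g h K := by
  refine _root_.exists_isCollar a.smooth_g a.periodic_g fun t ht ↦ ?_
  obtain ⟨i, hi⟩ := a.exists_angle_eq_node ht
  rw [eq_of_coe_angle_eq (periodic_deriv (periodic_deriv a.periodic_g)) hi]
  exact a.node_nondeg i

namespace IsCollar

lemma isExtension (H : IsCollar a.g h K) (hneg : ∀ i, a.ν i = -1) :
    IsExtension a (polarLift (profile a.g h K)) := by
  refine ⟨H.contDiff_polarLift_profile, H.polarLift_profile_sphPt, fun x hx hcrit ↦ ?_, fun i ↦ ?_⟩
  · obtain ⟨t, rfl⟩ := exists_sphPt_eq (mem_sphere_zero_iff_norm.1 hx)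
    rw [← one_smul ℝ (sphPt t), H.fderiv_polarLift_profile_eq_zero_iff (by simp)] at hcrit
    have ht := H.mul_deriv_deriv_neg t hcrit.1
    rw [← hcrit.2] at ht
    simp at ht
  · have hi := H.mul_deriv_deriv_neg _ (a.node_crit i)
    rw [hneg i, inner_gradient_left, H.fderiv_polarLift_profile_sphPt]
    push_cast
    exact ⟨fun h₂ ↦ by linarith [pos_of_mul_neg_left hi h₂.le],
      fun h₂ ↦ by linarith [neg_of_mul_neg_left hi h₂.le]⟩

lemma critPts_eq (H : IsCollar a.g h K) :
    critPts (polarLift (profile a.g h K)) =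
      insert 0 ((fun i ↦ critRadius h K (a.θ i) • sphPt (a.θ i)) '' a.maxNodes) := by
  have hpos (i : Fin n) : 0 < h (a.θ i) ↔ i ∈ a.maxNodes :=
    (pos_iff_neg_of_mul_neg (H.mul_deriv_deriv_neg _ (a.node_crit i)))
  have hper : Function.Periodic (fun t ↦ critRadius h K t • sphPt t) (2 * Real.pi) := fun t ↦ by
    simp only [critRadius, H.periodic_right t, sphPt_periodic t]
  rw [H.critPts_polarLift_profile]
  congr 1
  refine Set.Subset.antisymm ?_ ?_
  · rintro _ ⟨t, ⟨hg, ht⟩, rfl⟩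
    obtain ⟨i, hi⟩ := a.exists_angle_eq_node hg
    rw [eq_of_coe_angle_eq H.periodic_right hi, hpos] at ht
    exact ⟨i, ht, (eq_of_coe_angle_eq hper hi).symm⟩
  · rintro _ ⟨i, hi, rfl⟩
    exact ⟨a.θ i, ⟨a.node_crit i, (hpos i).2 hi⟩, rfl⟩

lemma encard_critPts (H : IsCollar a.g h K) :
    (critPts (polarLift (profile a.g h K))).encard = a.maxNodes.ncard + 1 := by
  have hinj : Function.Injective fun i ↦ critRadius h K (a.θ i) • sphPt (a.θ i) := fun i j hij ↦ by
    have hangle := arg_toComplex_smul_sphPt (H.critRadius_pos (a.θ i)) (a.θ i)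
    simp only at hij
    rw [hij, arg_toComplex_smul_sphPt (H.critRadius_pos _)] at hangle
    exact a.values_distinct i j (eq_of_coe_angle_eq a.periodic_g hangle.symm)
  have h0 : (0 : E2) ∉ (fun i ↦ critRadius h K (a.θ i) • sphPt (a.θ i)) '' a.maxNodes := by
    rintro ⟨i, -, hi⟩
    have hnorm := norm_smul_sphPt (H.critRadius_pos (a.θ i)).le (a.θ i)
    simp only at hi
    rw [hi, norm_zero] at hnorm
    exact (H.critRadius_pos (a.θ i)).ne hnorm
  rw [H.critPts_eq, Set.encard_insert_of_notMem h0, hinj.encard_image,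
    (Set.toFinite _).cast_ncard_eq]

end IsCollar

namespace Ribbon

theorem exists_isExtension_encard_critPts_eq (a : Ribbon n) (hneg : ∀ i, a.ν i = -1) :
    ∃ f, IsExtension a f ∧ (critPts f).encard = a.maxNodes.ncard + 1 := by
  obtain ⟨h, K, H⟩ := a.exists_isCollar
  exact ⟨_, H.isExtension hneg, H.encard_critPts⟩

lemma ncard_maxNodes_neg_le (a : Ribbon n) (hneg : ∀ i, a.ν i = -1) :
    (-a).maxNodes.ncard ≤ a.maxNodes.ncard := by
  obtain ⟨f, hf, hcrit⟩ := a.exists_isExtension_encard_critPts_eq hneg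
  have hle := hf.neg.ncard_maxNodes_add_one_le_encard_critPts hneg
  rw [critPts_neg, hcrit] at hle
  exact_mod_cast (ENat.add_le_add_iff_right ENat.one_ne_top).1 hle

theorem ncard_maxNodes (a : Ribbon n) (hneg : ∀ i, a.ν i = -1) : a.maxNodes.ncard = n / 2 := by
  have hle := a.ncard_maxNodes_neg_le hneg
  have hge := (-a).ncard_maxNodes_neg_le hneg
  rw [neg_neg] at hge
  have hsum := Set.ncard_add_ncard_compl a.maxNodes
  rw [← maxNodes_neg, Nat.card_fin] at hsum
  lia

end Ribbon

end Construction

/-- If all nodes of a ribbon `a` with `n` nodes are negative, then `γ(a) = n/2 + 1`: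
every extension of `a` has at least `n/2 + 1` critical points in the open unit disk,
and some extension has exactly `n/2 + 1` critical points. -/
theorem stmt_3 (n : ℕ) (a : Ribbon n) (hneg : ∀ i, a.ν i = -1) :
    (∀ f : E2 → ℝ, IsExtension a f → ((n / 2 + 1 : ℕ) : ℕ∞) ≤ (critPts f).encard) ∧
    (∃ f : E2 → ℝ, IsExtension a f ∧ (critPts f).encard = ((n / 2 + 1 : ℕ) : ℕ∞)) ∧
    gammaR a = ((n / 2 + 1 : ℕ) : ℕ∞) := by
  have hlower : ∀ f : E2 → ℝ, IsExtension a f → ((n / 2 + 1 : ℕ) : ℕ∞) ≤ (critPts f).encard :=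
    fun f hf ↦ a.ncard_maxNodes hneg ▸ hf.ncard_maxNodes_add_one_le_encard_critPts hneg
  have hattained : ∃ f : E2 → ℝ, IsExtension a f ∧
      (critPts f).encard = ((n / 2 + 1 : ℕ) : ℕ∞) :=
    a.ncard_maxNodes hneg ▸ a.exists_isExtension_encard_critPts_eq hneg
  refine ⟨hlower, hattained, le_antisymm (sInf_le hattained) (le_sInf ?_)⟩
  rintro k ⟨f, hf, rfl⟩
  exact hlower f hf
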